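/- arXiv:1907.00778 — 3 statements merged into one kernel-verified Lean document; each statement's English description precedes it below -/
import Mathlib

section
/- Suppose there are α_h ∈ (1,2], C_h ∈ [1,∞) and θ_h ∈ (0,∞] such that h(r) ≤ C_h λ^{α_h} h(λr) for all λ ≤ 1 and 0 < r < θ_h. Then for all r > 0, ∫_{r ≤ |z| < θ_h} |z| ν(dz) ≤ (2C_h/(α_h − 1)) · r · h(r). -/
/-! Write `h = concFn d A ν`. Markov's inequality for `z ↦ min 1 (‖z‖² / u²)` bounds the tail
`ν {u ≤ ‖z‖}` by `h u` for every `u > 0`. By the layer-cake formula the integral of `‖z‖` over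
`S = {r ≤ ‖z‖ < θ}` is `∫₀^∞ ν (S ∩ {t < ‖z‖}) dt`. For `t ≤ r` the integrand is at most `h r`,
which contributes `r h(r)`. For `t > r` it vanishes unless `t < θ`, and then it is at most `h t`,
which scaling with factor `r / t` bounds by `C (r / t) ^ α h(r)`; since `α > 1` this contributes
at most `C / (α - 1) · r h(r)`. Finally `1 ≤ C / (α - 1)` because `α ≤ 2` and `C ≥ 1`. -/

open MeasureTheory Filter Set
open scoped RealInnerProductSpace ENNReal Topology

noncomputable section

abbrev Ed (d : ℕ) := EuclideanSpace ℝ (Fin d)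

/-- The concentration function `h`. -/
def concFn (d : ℕ) (A : Ed d →L[ℝ] Ed d) (ν : Measure (Ed d)) (r : ℝ) : ℝ :=
  ‖A‖ / r ^ 2 + ∫ z, min 1 (‖z‖ ^ 2 / r ^ 2) ∂ν

/-- The function `K`. -/
def KFn (d : ℕ) (A : Ed d →L[ℝ] Ed d) (ν : Measure (Ed d)) (r : ℝ) : ℝ :=
  ‖A‖ / r ^ 2 + (∫ z in {z : Ed d | ‖z‖ < r}, ‖z‖ ^ 2 ∂ν) / r ^ 2

/-- Context hypotheses on the pair `(A, ν)`. -/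
structure IsLevyPair (d : ℕ) (A : Ed d →L[ℝ] Ed d) (ν : Measure (Ed d)) : Prop where
  symm : ∀ x y : Ed d, ⟪A x, y⟫ = ⟪x, A y⟫
  nonneg : ∀ x : Ed d, 0 ≤ ⟪x, A x⟫
  nu_zero : ν ({0} : Set (Ed d)) = 0
  nu_int : Integrable (fun z : Ed d => min 1 (‖z‖ ^ 2)) ν
  h_lim : Tendsto (concFn d A ν) (𝓝[>] (0 : ℝ)) atTop

/-- `g` is the (two-sided) inverse of `f` on `(0,∞)`. -/
structure IsInvOn (f g : ℝ → ℝ) : Prop where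
  pos : ∀ u : ℝ, 0 < u → 0 < g u
  right_inv : ∀ u : ℝ, 0 < u → f (g u) = u
  left_inv : ∀ r : ℝ, 0 < r → g (f r) = r

/-- Real part of the characteristic exponent. -/
def rePsi (d : ℕ) (A : Ed d →L[ℝ] Ed d) (ν : Measure (Ed d)) (x : Ed d) : ℝ :=
  ⟪x, A x⟫ + ∫ z, (1 - Real.cos ⟪x, z⟫) ∂ν

/-- The radial non-decreasing majorant ψ*. -/
def psiStar (d : ℕ) (A : Ed d →L[ℝ] Ed d) (ν : Measure (Ed d)) (r : ℝ) : ℝ :=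
  sSup (rePsi d A ν '' Metric.closedBall 0 r)

/-- Condition (C3). -/
def CondC3 (d : ℕ) (A : Ed d →L[ℝ] Ed d) (ν : Measure (Ed d)) (T : ℝ≥0∞) (c α : ℝ) :
    Prop :=
  (∀ x : Ed d, 1 / T < ENNReal.ofReal ‖x‖ → c * psiStar d A ν ‖x‖ ≤ rePsi d A ν x) ∧
    ∀ lam r : ℝ, 1 ≤ lam → 0 < r → 1 / T < ENNReal.ofReal r →
      c * lam ^ α * psiStar d A ν r ≤ psiStar d A ν (lam * r)

/-- Condition (A1): weak lower scaling of `h` at zero. -/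
def ScalA1 (h : ℝ → ℝ) (α C : ℝ) (θ : ℝ≥0∞) : Prop :=
  ∀ lam r : ℝ, 0 < lam → lam ≤ 1 → 0 < r → ENNReal.ofReal r < θ →
    h r ≤ C * lam ^ α * h (lam * r)

/-- The shifted drift `b_r`. -/
def bshift (d : ℕ) (ν : Measure (Ed d)) (b : Ed d) (r : ℝ) : Ed d :=
  b + ∫ z, (Set.indicator {w : Ed d | ‖w‖ < r} (fun w => w) z
      - Set.indicator {w : Ed d | ‖w‖ < 1} (fun w => w) z) ∂ν

/-- The characteristic exponent of the triplet `(A, ν, b)`. -/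
def psiFn (d : ℕ) (A : Ed d →L[ℝ] Ed d) (ν : Measure (Ed d)) (b : Ed d) (x : Ed d) : ℂ :=
  ((⟪x, A x⟫ : ℝ) : ℂ) - Complex.I * ((⟪x, b⟫ : ℝ) : ℂ) -
    ∫ z, (Complex.exp (Complex.I * ((⟪x, z⟫ : ℝ) : ℂ)) - 1 -
      Complex.I * ((⟪x, z⟫ : ℝ) : ℂ)
        * Set.indicator {w : Ed d | ‖w‖ < 1} (fun _ => (1 : ℂ)) z) ∂ν

/-- The transition density, defined by Fourier inversion. -/
def pdens (d : ℕ) (A : Ed d →L[ℝ] Ed d) (ν : Measure (Ed d)) (b : Ed d)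
    (t : ℝ) (x : Ed d) : ℝ :=
  ((2 * Real.pi) ^ d)⁻¹ *
    (∫ z : Ed d, Complex.exp (-(Complex.I * ((⟪x, z⟫ : ℝ) : ℂ))
        - (t : ℂ) * psiFn d A ν b z)).re


theorem integrable_min_one_sq {d : ℕ} {ν : Measure (Ed d)}
    (hν : Integrable (fun z : Ed d => min 1 (‖z‖ ^ 2)) ν) {u : ℝ} (hu : 0 < u) :
    Integrable (fun z : Ed d => min 1 (‖z‖ ^ 2 / u ^ 2)) ν := by
  refine (hν.const_mul (1 + 1 / u ^ 2)).mono' (by fun_prop) (Eventually.of_forall fun z => ?_)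
  have h1 : 0 < 1 / u ^ 2 := by positivity
  have hz : 0 ≤ ‖z‖ ^ 2 := by positivity
  rw [Real.norm_of_nonneg (by positivity), div_eq_mul_one_div]
  rcases le_total 1 (‖z‖ ^ 2) with h | h
  · rw [min_eq_left h]
    exact (min_le_left _ _).trans (by linarith)
  · rw [min_eq_right h]
    exact (min_le_right _ _).trans (by nlinarith)

theorem concFn_nonneg (d : ℕ) (A : Ed d →L[ℝ] Ed d) (ν : Measure (Ed d)) (u : ℝ) :
    0 ≤ concFn d A ν u :=
  add_nonneg (by positivity) (integral_nonneg fun z => by positivity)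

/-- Markov's inequality: the tail of `ν` is dominated by the concentration function. -/
theorem measure_norm_ge_le_concFn {d : ℕ} (A : Ed d →L[ℝ] Ed d) {ν : Measure (Ed d)}
    (hν : Integrable (fun z : Ed d => min 1 (‖z‖ ^ 2)) ν) {u : ℝ} (hu : 0 < u) :
    ν {z : Ed d | u ≤ ‖z‖} ≤ ENNReal.ofReal (concFn d A ν u) := by
  have hint := integrable_min_one_sq hν hu
  calc ν {z : Ed d | u ≤ ‖z‖}
      ≤ ν {z : Ed d | 1 ≤ ENNReal.ofReal (min 1 (‖z‖ ^ 2 / u ^ 2))} := by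
        refine measure_mono fun z (hz : u ≤ ‖z‖) => ?_
        have : 1 ≤ ‖z‖ ^ 2 / u ^ 2 := by
          rw [one_le_div (by positivity)]
          gcongr
        simp [this]
    _ ≤ ∫⁻ z, ENNReal.ofReal (min 1 (‖z‖ ^ 2 / u ^ 2)) ∂ν := by
        simpa using mul_meas_ge_le_lintegral₀ hint.aemeasurable.ennreal_ofReal 1
    _ = ENNReal.ofReal (∫ z, min 1 (‖z‖ ^ 2 / u ^ 2) ∂ν) :=
        (ofReal_integral_eq_lintegral_ofReal hint
          (Eventually.of_forall fun z => by positivity)).symm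
    _ ≤ ENNReal.ofReal (concFn d A ν u) := by
        refine ENNReal.ofReal_le_ofReal ?_
        have : 0 ≤ ‖A‖ / u ^ 2 := by positivity
        unfold concFn
        linarith

/-- The integral of `c (r / t) ^ α` over `t > r` equals `c r / (α - 1)`. -/
theorem lintegral_Ioi_div_rpow {r α c : ℝ} (hr : 0 < r) (hα : 1 < α) (hc : 0 ≤ c) :
    ∫⁻ t in Ioi r, ENNReal.ofReal (c * (r / t) ^ α) = ENNReal.ofReal (c * r / (α - 1)) := by
  have heq : ∀ t ∈ Ioi r, c * (r / t) ^ α = c * r ^ α * t ^ (-α) := fun t ht => by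
    have ht0 : 0 < t := hr.trans ht
    rw [Real.div_rpow hr.le ht0.le, Real.rpow_neg ht0.le]
    ring
  rw [setLIntegral_congr_fun measurableSet_Ioi fun t ht => by rw [heq t ht],
    ← ofReal_integral_eq_lintegral_ofReal
      ((integrableOn_Ioi_rpow_of_lt (by linarith) hr).const_mul _)]
  · rw [integral_const_mul, integral_Ioi_rpow_of_lt (by linarith) hr]
    congr 1
    have h1 : r ^ α * r ^ (-α + 1) = r := by
      rw [← Real.rpow_add hr]
      simp
    have h2 : α - 1 ≠ 0 := by linarith
    have h3 : -α + 1 ≠ 0 := by linarith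
    field_simp
    linear_combination (c * (1 - α)) * h1
  · refine (ae_restrict_mem measurableSet_Ioi).mono fun t ht => ?_
    have ht0 : 0 < t := hr.trans ht
    positivity

theorem stmt_6 (d : ℕ) (hd : 1 ≤ d) (A : Ed d →L[ℝ] Ed d) (ν : Measure (Ed d))
    (hpair : IsLevyPair d A ν)
    (αh Ch : ℝ) (θh : ℝ≥0∞) (hα : 1 < αh ∧ αh ≤ 2) (hC : 1 ≤ Ch) (hθ : 0 < θh)
    (hscal : ScalA1 (concFn d A ν) αh Ch θh) :
    ∀ r : ℝ, 0 < r →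
      ∫⁻ z in {z : Ed d | r ≤ ‖z‖ ∧ ENNReal.ofReal ‖z‖ < θh},
          ENNReal.ofReal ‖z‖ ∂ν ≤
        ENNReal.ofReal (2 * Ch / (αh - 1) * (r * concFn d A ν r)) := by
  intro r hr
  set h := concFn d A ν with hh
  set S : Set (Ed d) := {z | r ≤ ‖z‖ ∧ ENNReal.ofReal ‖z‖ < θh} with hS
  have hhr : 0 ≤ h r := concFn_nonneg d A ν r
  have htail : ∀ u, 0 < u → ν {z : Ed d | u ≤ ‖z‖} ≤ ENNReal.ofReal (h u) := fun u hu =>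
    measure_norm_ge_le_concFn A hpair.nu_int hu
  have hlow : ∫⁻ t in Ioc 0 r, ν.restrict S {z | t < ‖z‖} ≤ ENNReal.ofReal (r * h r) := by
    calc ∫⁻ t in Ioc 0 r, ν.restrict S {z | t < ‖z‖}
        ≤ ∫⁻ _ in Ioc 0 r, ENNReal.ofReal (h r) := by
          refine lintegral_mono fun t => ?_
          calc ν.restrict S {z | t < ‖z‖} ≤ ν.restrict S univ := measure_mono (subset_univ _)
            _ = ν S := Measure.restrict_apply_univ S
            _ ≤ ν {z | r ≤ ‖z‖} := measure_mono fun z hz => hz.1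
            _ ≤ _ := htail r hr
      _ = ENNReal.ofReal (r * h r) := by
          rw [setLIntegral_const, Real.volume_Ioc, sub_zero, mul_comm, ENNReal.ofReal_mul hr.le]
  have hhigh : ∫⁻ t in Ioi r, ν.restrict S {z | t < ‖z‖} ≤
      ENNReal.ofReal (Ch * h r * r / (αh - 1)) := by
    rw [← lintegral_Ioi_div_rpow hr hα.1 (by positivity)]
    refine setLIntegral_mono' measurableSet_Ioi fun t (ht : r < t) => ?_
    have ht0 : 0 < t := hr.trans ht
    rw [Measure.restrict_apply (measurableSet_lt measurable_const measurable_norm)]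
    by_cases htθ : ENNReal.ofReal t < θh
    · calc ν ({z : Ed d | t < ‖z‖} ∩ S) ≤ ν {z : Ed d | t ≤ ‖z‖} := by
            refine measure_mono fun z hz => ?_
            have hz1 : t < ‖z‖ := hz.1
            exact hz1.le
        _ ≤ ENNReal.ofReal (h t) := htail t ht0
        _ ≤ _ := by
          refine ENNReal.ofReal_le_ofReal ?_
          have := hscal (r / t) t (by positivity) ((div_le_one ht0).2 ht.le) ht0 htθ
          rw [div_mul_cancel₀ _ ht0.ne'] at this
          linarith
    · have : {z : Ed d | t < ‖z‖} ∩ S = ∅ := by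
        refine eq_empty_of_forall_notMem fun z hz => htθ ?_
        exact (ENNReal.ofReal_le_ofReal (le_of_lt hz.1)).trans_lt hz.2.2
      simp [this]
  rw [lintegral_eq_lintegral_meas_lt _ (Eventually.of_forall fun z => norm_nonneg z)
      measurable_norm.aemeasurable, ← Ioc_union_Ioi_eq_Ioi hr.le,
    lintegral_union measurableSet_Ioi Ioc_disjoint_Ioi_same]
  have hα1 : 0 < αh - 1 := by linarith [hα.1]
  refine (add_le_add hlow hhigh).trans ?_
  rw [← ENNReal.ofReal_add (by positivity) (by positivity)]
  refine ENNReal.ofReal_le_ofReal ?_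
  have h1 : 1 ≤ Ch / (αh - 1) := (one_le_div hα1).2 (by linarith [hα.2])
  have h2 : 0 ≤ r * h r := by positivity
  calc r * h r + Ch * h r * r / (αh - 1)
      = (1 + Ch / (αh - 1)) * (r * h r) := by ring
    _ ≤ (Ch / (αh - 1) + Ch / (αh - 1)) * (r * h r) := by gcongr
    _ = 2 * Ch / (αh - 1) * (r * h r) := by ring

end
end

section
/- Suppose there are T₁ ∈ (0,∞] and c₁ > 0 such that for every 0 < t < T₁ the measure P_t is absolutely continuous with respect to Lebesgue measure with a density p(t,·) satisfying sup_{x∈ℝ^d} p(t,x) ≤ c₁ [h^{-1}(1/t)]^{-d}. Then there is c₂ > 0, depending only on d and c₁, such that ∫_{ℝ^d} e^{−t Re ψ(z)} dz ≤ c₂ [h^{-1}(1/t)]^{-d} for all 0 < t < T₁/2 (for all t > 0 if T₁ = ∞). -/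
/-!
By Plancherel, `∫ e^{-2s Re ψ}` equals `(2π)^d ‖p(s,·)‖₂²`, and this is at most
`(2π)^d sup p(s,·)` since `p(s,·)` has total mass one. At `s = t/2` the hypothesis yields
`∫ e^{-t Re ψ} ≤ (2π)^d c₁ h⁻¹(2/t)^{-d}`, and what remains is to replace `h⁻¹(2/t)` by `h⁻¹(1/t)`.

This replacement needs a lower scaling property of `h⁻¹`, which the hypothesis itself provides.
Put `r = h⁻¹(2/t)`. By `rePsi_le`, `Re ψ ≤ 2 h(r) = 4/t` on the ball of radius `1/r`, so
`e^{-8} |B(0,1)| r^{-d} ≤ ∫ e^{-2t Re ψ}`, whereas the Plancherel bound at `s = t` shows that the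
right-hand side is at most `(2π)^d c₁ h⁻¹(1/t)^{-d}`. Hence `h⁻¹(2/t)^{-d} ≤ C h⁻¹(1/t)^{-d}` with
`C` depending only on `d` and `c₁`.

The Plancherel bound `lintegral_sq_charFun_le` is proved by Gaussian regularisation: Fubini and the
Fourier transform of a Gaussian turn `∫ e^{-b|z|²} |φ(z)|² dz` into a double integral of a Gaussian
in `x - y` against `μ ⊗ μ`, which is bounded uniformly in `b` when `μ ≤ M dx`; then `b → 0` by
Fatou. Only the domination `μ ≤ M dx` enters, so no measurability of `p(t,·)` is required.
-/

open MeasureTheory Filter Set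
open scoped RealInnerProductSpace ENNReal Topology

noncomputable section

/-! ### A Plancherel bound for measures with bounded density -/

lemma integrable_gauss (d : ℕ) {b : ℝ} (hb : 0 < b) :
    Integrable (fun z : Ed d => Real.exp (-b * ‖z‖ ^ 2)) := by
  have h := GaussianFourier.integrable_cexp_neg_mul_sq_norm_add (V := Ed d)
    (b := (b : ℂ)) (by simpa using hb) 0 0
  refine h.norm.congr (Eventually.of_forall fun z => ?_)
  have : -(b : ℂ) * (‖z‖ : ℂ) ^ 2 + 0 * ((⟪(0 : Ed d), z⟫ : ℝ) : ℂ)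
      = ((-b * ‖z‖ ^ 2 : ℝ) : ℂ) := by push_cast; ring
  simp only [this, Complex.norm_exp_ofReal]

lemma integral_gauss_sub_le {d : ℕ} (μ : Measure (Ed d)) {M : ℝ} (hM : 0 ≤ M)
    (hμ : μ ≤ ENNReal.ofReal M • volume) {a : ℝ} (ha : 0 < a) (x : Ed d) :
    ∫ y, Real.exp (-a * ‖x - y‖ ^ 2) ∂μ ≤ M * (Real.pi / a) ^ ((d : ℝ) / 2) := by
  have hint : Integrable (fun y : Ed d => Real.exp (-a * ‖x - y‖ ^ 2)) :=
    (integrable_gauss d ha).comp_sub_left x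
  calc ∫ y, Real.exp (-a * ‖x - y‖ ^ 2) ∂μ
      ≤ ∫ y, Real.exp (-a * ‖x - y‖ ^ 2) ∂(ENNReal.ofReal M • volume) :=
        integral_mono_measure hμ (Eventually.of_forall fun y => (Real.exp_pos _).le)
          (hint.smul_measure ENNReal.ofReal_ne_top)
    _ = M * (Real.pi / a) ^ ((d : ℝ) / 2) := by
        rw [integral_smul_measure, ENNReal.toReal_ofReal hM,
          integral_sub_left_eq_self (fun y : Ed d => Real.exp (-a * ‖y‖ ^ 2)),
          GaussianFourier.integral_rexp_neg_mul_sq_norm ha]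
        simp

/-- `|charFun μ|²` is the characteristic function of the difference of two independent copies. -/
lemma sq_norm_charFun {d : ℕ} (μ : Measure (Ed d)) [IsProbabilityMeasure μ] (z : Ed d) :
    ((‖charFun μ z‖ ^ 2 : ℝ) : ℂ)
      = ∫ w : Ed d × Ed d, Complex.exp (Complex.I * ((⟪w.1 - w.2, z⟫ : ℝ) : ℂ)) ∂(μ.prod μ) := by
  have h1 : ((‖charFun μ z‖ ^ 2 : ℝ) : ℂ) = charFun μ z * charFun μ (-z) := by
    rw [charFun_neg, Complex.mul_conj, Complex.normSq_eq_norm_sq]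
  rw [h1, charFun_apply, charFun_apply, ← integral_prod_mul]
  refine integral_congr_ae (Eventually.of_forall fun w => ?_)
  simp only [← Complex.exp_add, inner_sub_left, inner_neg_right]
  congr 1
  push_cast
  ring

/-- The Gaussian-regularised form of `∫ |charFun μ|² ≤ (2π)^d M`; the bound is uniform in `b`
because the factors `(π/b)^{d/2}` and `(4πb)^{d/2}` multiply to `(2π)^d`. -/
lemma integral_gauss_mul_charFun_le {d : ℕ} (μ : Measure (Ed d)) [IsProbabilityMeasure μ]
    {M : ℝ} (hM : 0 ≤ M) (hμ : μ ≤ ENNReal.ofReal M • volume) {b : ℝ} (hb : 0 < b) :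
    ∫ z : Ed d, Real.exp (-b * ‖z‖ ^ 2) * ‖charFun μ z‖ ^ 2 ≤ (2 * Real.pi) ^ d * M := by
  set F : Ed d → Ed d × Ed d → ℂ := fun z w =>
    Complex.exp (-(b : ℂ) * (‖z‖ : ℂ) ^ 2 + Complex.I * ((⟪w.1 - w.2, z⟫ : ℝ) : ℂ)) with hF
  have hFsplit : ∀ z w, F z w = ((Real.exp (-b * ‖z‖ ^ 2) : ℝ) : ℂ) *
      Complex.exp (Complex.I * ((⟪w.1 - w.2, z⟫ : ℝ) : ℂ)) := by
    intro z w
    simp only [hF, Complex.exp_add]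
    push_cast
    rfl
  have hFnorm : ∀ z w, ‖F z w‖ = Real.exp (-b * ‖z‖ ^ 2) := by
    intro z w
    rw [hFsplit, norm_mul, Complex.norm_exp_I_mul_ofReal, mul_one, Complex.norm_real,
      Real.norm_of_nonneg (Real.exp_pos _).le]
  have hFint : Integrable (Function.uncurry F) (volume.prod (μ.prod μ)) := by
    have hdom : Integrable (fun q : Ed d × (Ed d × Ed d) => Real.exp (-b * ‖q.1‖ ^ 2) * (1 : ℝ))
        (volume.prod (μ.prod μ)) := (integrable_gauss d hb).mul_prod (integrable_const (1 : ℝ))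
    refine hdom.mono' ?_ (Eventually.of_forall fun q => ?_)
    · have : Continuous (Function.uncurry F) := by
        simp only [hF, Function.uncurry_def]
        fun_prop
      exact this.aestronglyMeasurable
    · simp only [Function.uncurry_def, hFnorm, mul_one, le_refl]
  have h1 : ((∫ z : Ed d, Real.exp (-b * ‖z‖ ^ 2) * ‖charFun μ z‖ ^ 2 : ℝ) : ℂ)
      = ∫ z : Ed d, ∫ w, F z w ∂(μ.prod μ) := by
    rw [← integral_complex_ofReal]
    refine integral_congr_ae (Eventually.of_forall fun z => ?_)
    simp only [hFsplit, Complex.ofReal_mul]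
    rw [sq_norm_charFun, integral_const_mul]
  have h2 : ∀ w : Ed d × Ed d, ‖∫ z : Ed d, F z w‖
      = (Real.pi / b) ^ ((d : ℝ) / 2) * Real.exp (-(1 / (4 * b)) * ‖w.1 - w.2‖ ^ 2) := by
    intro w
    have hb' : (b : ℂ) ≠ 0 := by exact_mod_cast hb.ne'
    have e1 : Complex.I ^ 2 * (‖w.1 - w.2‖ : ℂ) ^ 2 / (4 * (b : ℂ))
        = ((-(1 / (4 * b)) * ‖w.1 - w.2‖ ^ 2 : ℝ) : ℂ) := by
      rw [Complex.I_sq]; push_cast; field_simp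
    have e2 : ((Real.pi : ℂ) / (b : ℂ)) ^ ((Module.finrank ℝ (Ed d) : ℂ) / 2)
        = (((Real.pi / b) ^ ((d : ℝ) / 2) : ℝ) : ℂ) := by
      rw [Complex.ofReal_cpow (by positivity)]
      push_cast
      simp
    rw [hF]
    simp only
    rw [GaussianFourier.integral_cexp_neg_mul_sq_norm_add (by simpa using hb), e1, e2, norm_mul,
      Complex.norm_exp_ofReal, Complex.norm_real, Real.norm_of_nonneg (by positivity)]
  have hc : 0 < 1 / (4 * b) := by positivity
  have h3 : ∫ w : Ed d × Ed d, Real.exp (-(1 / (4 * b)) * ‖w.1 - w.2‖ ^ 2) ∂(μ.prod μ)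
      ≤ M * (Real.pi / (1 / (4 * b))) ^ ((d : ℝ) / 2) := by
    have hint : Integrable
        (fun w : Ed d × Ed d => Real.exp (-(1 / (4 * b)) * ‖w.1 - w.2‖ ^ 2)) (μ.prod μ) := by
      refine (integrable_const (1 : ℝ)).mono' (by fun_prop) (Eventually.of_forall fun w => ?_)
      rw [Real.norm_of_nonneg (Real.exp_pos _).le, Real.exp_le_one_iff]
      have : 0 ≤ 1 / (4 * b) * ‖w.1 - w.2‖ ^ 2 := by positivity
      linarith
    rw [integral_prod _ hint]
    calc ∫ x, ∫ y, Real.exp (-(1 / (4 * b)) * ‖x - y‖ ^ 2) ∂μ ∂μ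
        ≤ ∫ x, M * (Real.pi / (1 / (4 * b))) ^ ((d : ℝ) / 2) ∂μ :=
          integral_mono hint.integral_prod_left (integrable_const _)
            (fun x => integral_gauss_sub_le μ hM hμ hc x)
      _ = _ := by simp
  have h4 : (Real.pi / b) ^ ((d : ℝ) / 2) * (Real.pi / (1 / (4 * b))) ^ ((d : ℝ) / 2)
      = (2 * Real.pi) ^ d := by
    have e : Real.pi / b * (Real.pi / (1 / (4 * b))) = (2 * Real.pi) ^ (2 : ℝ) := by
      rw [Real.rpow_two]; field_simp; ring
    rw [← Real.mul_rpow (by positivity) (by positivity), e, ← Real.rpow_mul (by positivity),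
      mul_div_cancel₀ _ (two_ne_zero), Real.rpow_natCast]
  have h0 : 0 ≤ ∫ z : Ed d, Real.exp (-b * ‖z‖ ^ 2) * ‖charFun μ z‖ ^ 2 :=
    integral_nonneg fun z => by positivity
  calc ∫ z : Ed d, Real.exp (-b * ‖z‖ ^ 2) * ‖charFun μ z‖ ^ 2
      = ‖∫ z : Ed d, ∫ w, F z w ∂(μ.prod μ)‖ := by
        rw [← h1, Complex.norm_real, Real.norm_of_nonneg h0]
    _ = ‖∫ w, (∫ z : Ed d, F z w) ∂(μ.prod μ)‖ := by rw [integral_integral_swap hFint]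
    _ ≤ ∫ w, ‖∫ z : Ed d, F z w‖ ∂(μ.prod μ) := norm_integral_le_integral_norm _
    _ = (Real.pi / b) ^ ((d : ℝ) / 2) *
          ∫ w : Ed d × Ed d, Real.exp (-(1 / (4 * b)) * ‖w.1 - w.2‖ ^ 2) ∂(μ.prod μ) := by
        simp only [h2, integral_const_mul]
    _ ≤ (Real.pi / b) ^ ((d : ℝ) / 2) * (M * (Real.pi / (1 / (4 * b))) ^ ((d : ℝ) / 2)) := by
        gcongr
    _ = (2 * Real.pi) ^ d * M := by rw [← h4]; ring

/-- Half of Plancherel's identity: a probability measure whose density is at most `M` satisfies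
`‖charFun μ‖₂² = (2π)^d ‖dμ/dx‖₂² ≤ (2π)^d M`. Letting the variance of the Gaussian regularisation
tend to infinity also shows that `‖charFun μ‖²` is integrable. -/
lemma lintegral_sq_charFun_le {d : ℕ} (μ : Measure (Ed d)) [IsProbabilityMeasure μ]
    {M : ℝ} (hM : 0 ≤ M) (hμ : μ ≤ ENNReal.ofReal M • volume) :
    ∫⁻ z : Ed d, ENNReal.ofReal (‖charFun μ z‖ ^ 2) ≤ ENNReal.ofReal ((2 * Real.pi) ^ d * M) := by
  have hmeas : Measurable (charFun μ) := measurable_charFun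
  set f : ℕ → Ed d → ℝ≥0∞ := fun n z =>
    ENNReal.ofReal (Real.exp (-(1 / ((n : ℝ) + 1)) * ‖z‖ ^ 2) * ‖charFun μ z‖ ^ 2) with hf
  have hlim : ∀ z, Tendsto (fun n => f n z) atTop (𝓝 (ENNReal.ofReal (‖charFun μ z‖ ^ 2))) := by
    intro z
    refine ENNReal.tendsto_ofReal ?_
    have h1 : Tendsto (fun n : ℕ => -(1 / ((n : ℝ) + 1)) * ‖z‖ ^ 2) atTop (𝓝 0) := by
      simpa using (tendsto_one_div_add_atTop_nhds_zero_nat (𝕜 := ℝ)).neg.mul_const (‖z‖ ^ 2)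
    simpa using ((Real.continuous_exp.tendsto 0).comp h1).mul_const (‖charFun μ z‖ ^ 2)
  have hbound : ∀ n, ∫⁻ z, f n z ≤ ENNReal.ofReal ((2 * Real.pi) ^ d * M) := by
    intro n
    have hn : (0 : ℝ) < 1 / ((n : ℝ) + 1) := by positivity
    have hint : Integrable (fun z : Ed d =>
        Real.exp (-(1 / ((n : ℝ) + 1)) * ‖z‖ ^ 2) * ‖charFun μ z‖ ^ 2) := by
      refine (integrable_gauss d hn).mono'
        (by exact (Measurable.aestronglyMeasurable (by fun_prop)))
        (Eventually.of_forall fun z => ?_)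
      rw [Real.norm_of_nonneg (by positivity)]
      exact mul_le_of_le_one_right (Real.exp_pos _).le
        (pow_le_one₀ (norm_nonneg _) (norm_charFun_le_one z))
    rw [hf, ← ofReal_integral_eq_lintegral_ofReal hint
      (Eventually.of_forall fun z => by positivity)]
    exact ENNReal.ofReal_le_ofReal (integral_gauss_mul_charFun_le μ hM hμ hn)
  calc ∫⁻ z : Ed d, ENNReal.ofReal (‖charFun μ z‖ ^ 2)
      = ∫⁻ z, liminf (fun n => f n z) atTop := by
        refine lintegral_congr fun z => ((hlim z).liminf_eq).symm
    _ ≤ liminf (fun n => ∫⁻ z, f n z) atTop :=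
        lintegral_liminf_le fun n => by simp only [hf]; fun_prop
    _ ≤ ENNReal.ofReal ((2 * Real.pi) ^ d * M) := by
        refine (liminf_le_liminf (Eventually.of_forall hbound)).trans ?_
        simp

/-! ### The real part of the characteristic exponent -/

section exponent

variable {d : ℕ} {A : Ed d →L[ℝ] Ed d} {ν : Measure (Ed d)}

lemma integrable_min_div (hL : IsLevyPair d A ν) {r : ℝ} (hr : 0 < r) :
    Integrable (fun z : Ed d => min 1 (‖z‖ ^ 2 / r ^ 2)) ν := by
  refine (hL.nu_int.const_mul (1 + 1 / r ^ 2)).mono' (by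
    exact (Measurable.aestronglyMeasurable (by fun_prop))) (Eventually.of_forall fun z => ?_)
  rw [Real.norm_of_nonneg (by positivity)]
  have h1 : 0 ≤ 1 / r ^ 2 := by positivity
  have h2 : ‖z‖ ^ 2 / r ^ 2 = 1 / r ^ 2 * ‖z‖ ^ 2 := by ring
  rw [h2]
  rcases le_total 1 (‖z‖ ^ 2) with h | h
  · rw [min_eq_left h]
    exact (min_le_left _ _).trans (by linarith)
  · rw [min_eq_right h]
    exact (min_le_right _ _).trans (by nlinarith [sq_nonneg ‖z‖])

lemma norm_exp_I_sub_one_sub_le (u : ℝ) :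
    ‖Complex.exp (Complex.I * (u : ℂ)) - 1 - Complex.I * (u : ℂ)‖ ≤ 3 * u ^ 2 := by
  have hn : ‖Complex.I * (u : ℂ)‖ = |u| := by simp
  rcases le_total |u| 1 with h | h
  · have := Complex.norm_exp_sub_one_sub_id_le (x := Complex.I * (u : ℂ)) (by rw [hn]; exact h)
    rw [hn, sq_abs] at this
    nlinarith [sq_nonneg u]
  · have h1 : ‖Complex.exp (Complex.I * (u : ℂ)) - 1‖ ≤ |u| :=
      Real.norm_exp_I_mul_ofReal_sub_one_le
    have h2 := norm_sub_le (Complex.exp (Complex.I * (u : ℂ)) - 1) (Complex.I * (u : ℂ))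
    rw [hn] at h2
    nlinarith [sq_abs u]

lemma integrable_psiFn_integrand (hL : IsLevyPair d A ν) (x : Ed d) :
    Integrable (fun z : Ed d => Complex.exp (Complex.I * ((⟪x, z⟫ : ℝ) : ℂ)) - 1 -
      Complex.I * ((⟪x, z⟫ : ℝ) : ℂ)
        * Set.indicator {w : Ed d | ‖w‖ < 1} (fun _ => (1 : ℂ)) z) ν := by
  refine (hL.nu_int.const_mul (3 * ‖x‖ ^ 2 + 2)).mono' ?_ (Eventually.of_forall fun z => ?_)
  · have hs : MeasurableSet {w : Ed d | ‖w‖ < 1} := measurableSet_lt (by fun_prop) (by fun_prop)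
    have hm : Measurable (Set.indicator {w : Ed d | ‖w‖ < 1} (fun _ => (1 : ℂ))) :=
      measurable_const.indicator hs
    exact Measurable.aestronglyMeasurable (by fun_prop)
  · by_cases hz : ‖z‖ < 1
    · have hz2 : ‖z‖ ^ 2 ≤ 1 := pow_le_one₀ (norm_nonneg _) hz.le
      have hi : Set.indicator {w : Ed d | ‖w‖ < 1} (fun _ => (1 : ℂ)) z = 1 :=
        Set.indicator_of_mem (s := {w : Ed d | ‖w‖ < 1}) hz _
      rw [hi, mul_one, min_eq_right hz2]
      have h1 := norm_exp_I_sub_one_sub_le ⟪x, z⟫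
      have h2 : ⟪x, z⟫ ^ 2 ≤ ‖x‖ ^ 2 * ‖z‖ ^ 2 := by
        rw [← mul_pow, ← sq_abs]
        exact pow_le_pow_left₀ (abs_nonneg _) (abs_real_inner_le_norm x z) 2
      nlinarith [sq_nonneg ‖z‖]
    · have hi : Set.indicator {w : Ed d | ‖w‖ < 1} (fun _ => (1 : ℂ)) z = 0 :=
        Set.indicator_of_notMem (s := {w : Ed d | ‖w‖ < 1}) hz _
      have hz2 : 1 ≤ ‖z‖ ^ 2 := one_le_pow₀ (not_lt.1 hz)
      rw [hi, mul_zero, sub_zero, min_eq_left hz2]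
      have h2 := norm_sub_le (Complex.exp (Complex.I * ((⟪x, z⟫ : ℝ) : ℂ))) 1
      rw [Complex.norm_exp_I_mul_ofReal, norm_one] at h2
      nlinarith [sq_nonneg ‖x‖]

/-- Taking real parts under the integral is legitimate because the Lévy–Khintchine integrand is
`ν`-integrable. -/
lemma re_psiFn (hL : IsLevyPair d A ν) (b x : Ed d) :
    (psiFn d A ν b x).re = rePsi d A ν x := by
  have hre : (∫ z, (Complex.exp (Complex.I * ((⟪x, z⟫ : ℝ) : ℂ)) - 1 -
      Complex.I * ((⟪x, z⟫ : ℝ) : ℂ)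
        * Set.indicator {w : Ed d | ‖w‖ < 1} (fun _ => (1 : ℂ)) z) ∂ν).re
      = ∫ z, -(1 - Real.cos ⟪x, z⟫) ∂ν := by
    have := integral_re (integrable_psiFn_integrand hL x)
    simp only [RCLike.re_to_complex] at this
    rw [← this]
    refine integral_congr_ae (Eventually.of_forall fun z => ?_)
    by_cases hz : ‖z‖ < 1
    · simp [Set.indicator, hz, Complex.exp_re]
    · simp [Set.indicator, hz, Complex.exp_re]
  rw [psiFn, rePsi, Complex.sub_re, hre, integral_neg]
  simp

/-- On the ball of radius `1/r` the real exponent is controlled by the concentration function at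
scale `r`, because `1 - cos u ≤ 2 min(1, u²)` and `|⟨x,z⟩| ≤ |z|/r` there. -/
lemma rePsi_le (hL : IsLevyPair d A ν) {r : ℝ} (hr : 0 < r) {x : Ed d} (hx : ‖x‖ ≤ 1 / r) :
    rePsi d A ν x ≤ 2 * concFn d A ν r := by
  have hxr : ‖x‖ ^ 2 ≤ 1 / r ^ 2 := by
    have := pow_le_pow_left₀ (norm_nonneg x) hx 2
    rwa [div_pow, one_pow] at this
  have hA : ⟪x, A x⟫ ≤ ‖A‖ / r ^ 2 := by
    have h1 := real_inner_le_norm x (A x)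
    have h2 := A.le_opNorm x
    calc ⟪x, A x⟫ ≤ ‖x‖ * (‖A‖ * ‖x‖) := h1.trans (by gcongr)
      _ = ‖A‖ * ‖x‖ ^ 2 := by ring
      _ ≤ ‖A‖ * (1 / r ^ 2) := by gcongr
      _ = ‖A‖ / r ^ 2 := by ring
  have hν : ∫ z, (1 - Real.cos ⟪x, z⟫) ∂ν ≤ ∫ z, 2 * min 1 (‖z‖ ^ 2 / r ^ 2) ∂ν := by
    refine integral_mono_of_nonneg (Eventually.of_forall fun z => ?_)
      ((integrable_min_div hL hr).const_mul 2) (Eventually.of_forall fun z => ?_)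
    · simpa using Real.cos_le_one _
    · have h1 := Real.neg_one_le_cos ⟪x, z⟫
      have h2 := Real.one_sub_sq_div_two_le_cos (x := ⟪x, z⟫)
      have h3 : ⟪x, z⟫ ^ 2 ≤ ‖z‖ ^ 2 / r ^ 2 := by
        calc ⟪x, z⟫ ^ 2 ≤ (‖x‖ * ‖z‖) ^ 2 := by
              rw [← sq_abs]
              exact pow_le_pow_left₀ (abs_nonneg _) (abs_real_inner_le_norm x z) 2
          _ = ‖x‖ ^ 2 * ‖z‖ ^ 2 := by ring
          _ ≤ 1 / r ^ 2 * ‖z‖ ^ 2 := by gcongr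
          _ = ‖z‖ ^ 2 / r ^ 2 := by ring
      simp only
      rcases le_total 1 (‖z‖ ^ 2 / r ^ 2) with h | h
      · rw [min_eq_left h]; linarith
      · rw [min_eq_right h]; nlinarith [sq_nonneg ⟪x, z⟫]
  rw [integral_const_mul] at hν
  have : 0 ≤ ‖A‖ / r ^ 2 := by positivity
  rw [rePsi, concFn]
  linarith

end exponent

/-! ### Heat kernel bounds in terms of the exponent -/

/-- The Plancherel bound at time `s`, written for the exponent: the squared modulus of the
characteristic function of `P_s` is `exp (-2 s Re ψ)`. -/
lemma lintegral_exp_rePsi_le {d : ℕ} {A : Ed d →L[ℝ] Ed d} {ν : Measure (Ed d)} {b : Ed d}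
    (hL : IsLevyPair d A ν) {s M : ℝ} (hM : 0 ≤ M) (μ : Measure (Ed d)) [IsProbabilityMeasure μ]
    (hchar : ∀ x : Ed d, (∫ y, Complex.exp (Complex.I * ((⟪x, y⟫ : ℝ) : ℂ)) ∂μ) =
            Complex.exp (-(s : ℂ) * psiFn d A ν b x))
    {q : Ed d → ℝ} (hq : μ = volume.withDensity (fun x => ENNReal.ofReal (q x)))
    (hqM : ∀ x, q x ≤ M) :
    ∫⁻ z : Ed d, ENNReal.ofReal (Real.exp (-(2 * s * rePsi d A ν z)))
      ≤ ENNReal.ofReal ((2 * Real.pi) ^ d * M) := by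
  have hμ : μ ≤ ENNReal.ofReal M • volume := by
    rw [hq, ← withDensity_const]
    exact withDensity_mono (Eventually.of_forall fun x => ENNReal.ofReal_le_ofReal (hqM x))
  refine le_trans (le_of_eq (lintegral_congr fun z => ?_)) (lintegral_sq_charFun_le μ hM hμ)
  have h1 : charFun μ z = Complex.exp (-(s : ℂ) * psiFn d A ν b z) := by
    rw [← hchar, charFun_apply]
    refine integral_congr_ae (Eventually.of_forall fun y => ?_)
    simp only [real_inner_comm, mul_comm]
  have h2 : (-(s : ℂ) * psiFn d A ν b z).re = -s * rePsi d A ν z := by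
    rw [← Complex.ofReal_neg, Complex.re_ofReal_mul, re_psiFn hL]
  rw [h1, Complex.norm_exp, h2, ← Real.exp_nat_mul]
  congr 2
  push_cast
  ring

theorem stmt_8 (d : ℕ) (hd : 1 ≤ d) (c1 : ℝ) (hc1 : 0 < c1) :
    ∃ c2 : ℝ, 0 < c2 ∧
      ∀ (A : Ed d →L[ℝ] Ed d) (ν : Measure (Ed d)) (b : Ed d) (hinv : ℝ → ℝ)
        (P : ℝ → Measure (Ed d)) (p : ℝ → Ed d → ℝ) (T1 : ℝ≥0∞),
        IsLevyPair d A ν → IsInvOn (concFn d A ν) hinv → 0 < T1 →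
        (∀ t : ℝ, 0 < t → IsProbabilityMeasure (P t)) →
        (∀ t : ℝ, 0 < t → ∀ x : Ed d,
          (∫ y, Complex.exp (Complex.I * ((⟪x, y⟫ : ℝ) : ℂ)) ∂(P t)) =
            Complex.exp (-(t : ℂ) * psiFn d A ν b x)) →
        (∀ t : ℝ, 0 < t → ENNReal.ofReal t < T1 →
          P t = volume.withDensity (fun x => ENNReal.ofReal (p t x)) ∧
            ∀ x : Ed d, p t x ≤ c1 * hinv (1 / t) ^ (-(d : ℤ))) →
        ∀ t : ℝ, 0 < t → ENNReal.ofReal t < T1 / 2 →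
          (∫ z : Ed d, Real.exp (-(t * rePsi d A ν z))) ≤
            c2 * hinv (1 / t) ^ (-(d : ℤ)) := by
  set V : ℝ := (volume : Measure (Ed d)).real (Metric.ball 0 1) with hV
  have hVpos : 0 < V := by
    rw [hV, Measure.real]
    exact ENNReal.toReal_pos (Metric.measure_ball_pos volume 0 one_pos).ne' measure_ball_lt_top.ne
  set K : ℝ := (2 * Real.pi) ^ d * c1 with hK
  have hKpos : 0 < K := by positivity
  refine ⟨K * (K * Real.exp 8 / V), by positivity, ?_⟩
  intro A ν b hinv P p T1 hL hI hT hprob hchar hdens t ht htT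
  have htT1 : ENNReal.ofReal t < T1 := htT.trans_le ENNReal.half_le_self
  have hht : 0 < t / 2 := by positivity
  have hhtT1 : ENNReal.ofReal (t / 2) < T1 :=
    (ENNReal.ofReal_le_ofReal (by linarith)).trans_lt htT1
  -- `R = h⁻¹(1/t)` is the scale of the bound to be shown, `r = h⁻¹(2/t)` the one at time `t/2`.
  set R : ℝ := hinv (1 / t) with hR
  set r : ℝ := hinv (2 / t) with hr
  have hRpos : 0 < R := hI.pos _ (by positivity)
  have hrpos : 0 < r := hI.pos _ (by positivity)
  have hhr : concFn d A ν r = 2 / t := hI.right_inv _ (by positivity)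
  have := hprob t ht
  have := hprob (t / 2) hht
  have upper : ∫⁻ z : Ed d, ENNReal.ofReal (Real.exp (-(t * rePsi d A ν z)))
      ≤ ENNReal.ofReal (K * r ^ (-(d : ℤ))) := by
    have e : 1 / (t / 2) = 2 / t := by field_simp
    have h := lintegral_exp_rePsi_le hL (M := c1 * hinv (1 / (t / 2)) ^ (-(d : ℤ)))
      (by rw [e]; positivity) (P (t / 2)) (hchar _ hht) (hdens _ hht hhtT1).1
      (hdens _ hht hhtT1).2
    rw [e, ← mul_assoc, mul_div_cancel₀ t (two_ne_zero)] at h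
    exact h
  have scale : r ^ (-(d : ℤ)) ≤ K * Real.exp 8 / V * R ^ (-(d : ℤ)) := by
    have h := lintegral_exp_rePsi_le hL (M := c1 * R ^ (-(d : ℤ)))
      (by positivity) (P t) (hchar _ ht) (hdens _ ht htT1).1 (hdens _ ht htT1).2
    -- On the ball of radius `1/r` the exponent is at most `2 h(r) = 4/t`.
    have hlow : ENNReal.ofReal (Real.exp (-8)) * volume (Metric.ball (0 : Ed d) (1 / r))
        ≤ ∫⁻ z : Ed d, ENNReal.ofReal (Real.exp (-(2 * t * rePsi d A ν z))) := by
      rw [← setLIntegral_const]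
      refine le_trans (setLIntegral_mono' measurableSet_ball fun z hz => ?_)
        (setLIntegral_le_lintegral _ _)
      have hz' : ‖z‖ ≤ 1 / r := (mem_ball_zero_iff.1 hz).le
      have h1 := rePsi_le hL hrpos hz'
      rw [hhr] at h1
      refine ENNReal.ofReal_le_ofReal (Real.exp_le_exp.2 ?_)
      have h2 : 2 * t * rePsi d A ν z ≤ 2 * t * (2 * (2 / t)) := by gcongr
      have h3 : 2 * t * (2 * (2 / t)) = 8 := by field_simp; norm_num
      linarith
    have hvol : volume (Metric.ball (0 : Ed d) (1 / r)) = ENNReal.ofReal (r ^ (-(d : ℤ)) * V) := by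
      rw [Measure.addHaar_ball_of_pos _ _ (by positivity), ENNReal.ofReal_mul (by positivity), hV,
        ofReal_measureReal measure_ball_lt_top.ne]
      congr 2
      simp
    have h5 := hlow.trans h
    rw [hvol, ← ENNReal.ofReal_mul (Real.exp_pos _).le,
      ENNReal.ofReal_le_ofReal_iff (by positivity), Real.exp_neg] at h5
    rw [div_mul_eq_mul_div, le_div_iff₀ hVpos]
    have h6 := mul_le_mul_of_nonneg_left h5 (Real.exp_pos 8).le
    rw [← mul_assoc, mul_inv_cancel₀ (Real.exp_pos 8).ne', one_mul] at h6
    calc r ^ (-(d : ℤ)) * V ≤ _ := h6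
      _ = _ := by rw [hK]; ring
  have hreal : ∫ z : Ed d, Real.exp (-(t * rePsi d A ν z)) ≤ K * r ^ (-(d : ℤ)) := by
    by_cases hint : Integrable (fun z : Ed d => Real.exp (-(t * rePsi d A ν z)))
    · rw [← ofReal_integral_eq_lintegral_ofReal hint
        (Eventually.of_forall fun z => (Real.exp_pos _).le)] at upper
      exact (ENNReal.ofReal_le_ofReal_iff (by positivity)).1 upper
    · -- The Bochner integral of a non-integrable function is `0` by convention.
      rw [integral_undef hint]; positivity
  calc ∫ z : Ed d, Real.exp (-(t * rePsi d A ν z)) ≤ K * r ^ (-(d : ℤ)) := hreal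
    _ ≤ K * (K * Real.exp 8 / V * R ^ (-(d : ℤ))) := by gcongr
    _ = K * (K * Real.exp 8 / V) * R ^ (-(d : ℤ)) := by ring

end
end

section
/- Assume condition (C3). Then for every m ∈ ℕ there is c₅ > 0, depending only on d, m, α₃ and c₃, such that ∫_{ℝ^d} |z|^m e^{−t Re ψ(z)} dz ≤ c₅ [h^{-1}(1/t)]^{-d-m} for all 0 < t < 1/h(T₃) (with 1/h(T₃) read as ∞ when T₃ = ∞). -/
/-! The function `h(R)` is comparable with `ψ*(1/R)`: only `h(R) ≤ (1 + 15 d) ψ*(1/R)` is needed.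
For the Gaussian part, polarization gives `‖A‖ ≤ sup_{|x| ≤ 1} ⟨x, A x⟩`. For the jump part, one has
`min(1, u²) ≤ 15 ∫₀¹ (1 - cos (s u)) ds`; applying this with `u = z_j / R` for every coordinate `j`,
summing over `j` and integrating in `z` bounds `∫ min(1, |z|²/R²) ν(dz)` by an average of values of
`Re ψ` on the ball of radius `1/R` (Fubini applies since a Lévy measure is `σ`-finite). This is
`concFn_le_psiStar`.

With `R = h⁻¹(1/t)`, the restriction on `t` says `R < T₃`, because `h` is non-increasing. For
`|z| > 1/R` the two parts of (C3) then give
`t Re ψ(z) ≥ t c₃² (R|z|)^α₃ ψ*(1/R) ≥ (c₃² / (1 + 15 d)) (R|z|)^α₃`, while for `|z| ≤ 1/R` the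
integrand is at most `|z|^m`. Both cases are covered by
`e^{-t Re ψ(z)} ≤ e^κ e^{-κ (R|z|)^α₃}`, and scaling `z = w / R` yields the claim. -/

open MeasureTheory Filter Set
open scoped RealInnerProductSpace ENNReal Topology

noncomputable section

/-! ### The Lévy measure -/

lemma IsLevyPair.sigmaFinite {d : ℕ} {A : Ed d →L[ℝ] Ed d} {ν : Measure (Ed d)}
    (L : IsLevyPair d A ν) : SigmaFinite ν := by
  obtain ⟨t, ht, h0, hs⟩ := L.nu_int.aefinStronglyMeasurable.exists_set_sigmaFinite
  have hz : ∀ᵐ z ∂ν, z ≠ 0 := by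
    rw [ae_iff]; simpa using L.nu_zero
  have hmem : ∀ᵐ z ∂ν, z ∈ t := by
    have h1 := (ae_restrict_iff' ht.compl).1 h0
    filter_upwards [h1, hz] with z h1 hz
    by_contra hzt
    have h2 := h1 hzt
    have h3 : 0 < ‖z‖ := norm_pos_iff.2 hz
    have h4 : 0 < min 1 (‖z‖ ^ 2) := lt_min one_pos (by positivity)
    exact h4.ne' h2
  rwa [Measure.restrict_eq_self_of_ae_mem hmem] at hs

lemma IsLevyPair.integrable_min {d : ℕ} {A : Ed d →L[ℝ] Ed d} {ν : Measure (Ed d)}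
    (L : IsLevyPair d A ν) {R : ℝ} (hR : 0 < R) :
    Integrable (fun z : Ed d => min 1 (‖z‖ ^ 2 / R ^ 2)) ν := by
  refine (L.nu_int.const_mul (1 + 1 / R ^ 2)).mono'
    (by fun_prop : Measurable fun z : Ed d => min 1 (‖z‖ ^ 2 / R ^ 2)).aestronglyMeasurable
    (Eventually.of_forall fun z => ?_)
  have hp : 0 < 1 / R ^ 2 := by positivity
  rw [Real.norm_of_nonneg (by positivity), div_eq_mul_one_div]
  rcases le_total 1 (‖z‖ ^ 2) with h | h
  · rw [min_eq_left h]
    exact (min_le_left _ _).trans (by linarith)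
  · rw [min_eq_right h]
    exact (min_le_right _ _).trans (by nlinarith [sq_nonneg ‖z‖])

lemma IsLevyPair.concFn_anti {d : ℕ} {A : Ed d →L[ℝ] Ed d} {ν : Measure (Ed d)}
    (L : IsLevyPair d A ν) {r R : ℝ} (hr : 0 < r) (hrR : r ≤ R) :
    concFn d A ν R ≤ concFn d A ν r := by
  have hR := hr.trans_le hrR
  unfold concFn
  refine add_le_add (by gcongr) (integral_mono (L.integrable_min hR) (L.integrable_min hr) ?_)
  intro z
  dsimp only
  gcongr

/-! ### The real part of the exponent and its majorant -/

lemma one_sub_cos_inner_le {d : ℕ} {R : ℝ} {x : Ed d} (hx : ‖x‖ ≤ 1 / R) (z : Ed d) :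
    1 - Real.cos ⟪x, z⟫ ≤ 2 * min 1 (‖z‖ ^ 2 / R ^ 2) := by
  have h1 : |⟪x, z⟫| ≤ ‖z‖ / R := by
    refine (abs_real_inner_le_norm x z).trans ?_
    rw [div_eq_mul_one_div, mul_comm]
    gcongr
  have h2 : ⟪x, z⟫ ^ 2 ≤ ‖z‖ ^ 2 / R ^ 2 := by
    rw [← div_pow, ← sq_abs]
    gcongr
  have h3 := Real.one_sub_sq_div_two_le_cos (x := ⟪x, z⟫)
  have h4 := Real.neg_one_le_cos ⟪x, z⟫
  rcases le_total 1 (‖z‖ ^ 2 / R ^ 2) with h | h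
  · rw [min_eq_left h]; linarith
  · rw [min_eq_right h]; nlinarith [sq_nonneg ⟪x, z⟫]

lemma IsLevyPair.integrable_cos {d : ℕ} {A : Ed d →L[ℝ] Ed d} {ν : Measure (Ed d)}
    (L : IsLevyPair d A ν) {R : ℝ} (hR : 0 < R) {x : Ed d} (hx : ‖x‖ ≤ 1 / R) :
    Integrable (fun z : Ed d => 1 - Real.cos ⟪x, z⟫) ν := by
  refine ((L.integrable_min hR).const_mul 2).mono'
    (by fun_prop : Continuous fun z : Ed d => 1 - Real.cos ⟪x, z⟫).aestronglyMeasurable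
    (Eventually.of_forall fun z => ?_)
  rw [Real.norm_of_nonneg (by linarith [Real.cos_le_one ⟪x, z⟫])]
  exact one_sub_cos_inner_le hx z

lemma integral_cos_nonneg {d : ℕ} (ν : Measure (Ed d)) (x : Ed d) :
    0 ≤ ∫ z, (1 - Real.cos ⟪x, z⟫) ∂ν :=
  integral_nonneg fun z => by simpa using Real.cos_le_one ⟪x, z⟫

lemma IsLevyPair.rePsi_nonneg {d : ℕ} {A : Ed d →L[ℝ] Ed d} {ν : Measure (Ed d)}
    (L : IsLevyPair d A ν) (x : Ed d) : 0 ≤ rePsi d A ν x :=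
  add_nonneg (L.nonneg x) (integral_cos_nonneg ν x)

/-- Boundedness of `Re ψ` on balls, which makes the supremum in `psiStar` a genuine one. -/
lemma IsLevyPair.rePsi_le_psiStar {d : ℕ} {A : Ed d →L[ℝ] Ed d} {ν : Measure (Ed d)}
    (L : IsLevyPair d A ν) {R : ℝ} (hR : 0 < R) {x : Ed d} (hx : ‖x‖ ≤ 1 / R) :
    rePsi d A ν x ≤ psiStar d A ν (1 / R) := by
  refine le_csSup ⟨‖A‖ * (1 / R) ^ 2 + ∫ z, 2 * min 1 (‖z‖ ^ 2 / R ^ 2) ∂ν, ?_⟩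
    ⟨x, by simpa using hx, rfl⟩
  rintro _ ⟨y, hy, rfl⟩
  have hy' : ‖y‖ ≤ 1 / R := by simpa using hy
  refine add_le_add ?_ (integral_mono (L.integrable_cos hR hy')
    ((L.integrable_min hR).const_mul 2) fun z => one_sub_cos_inner_le hy' z)
  calc ⟪y, A y⟫ ≤ ‖y‖ * ‖A y‖ := real_inner_le_norm _ _
    _ ≤ ‖y‖ * (‖A‖ * ‖y‖) := by gcongr; exact A.le_opNorm y
    _ = ‖A‖ * ‖y‖ ^ 2 := by ring
    _ ≤ _ := by gcongr

/-! ### Comparison of the concentration function with the majorant -/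

lemma IsLevyPair.norm_A_le {d : ℕ} {A : Ed d →L[ℝ] Ed d} {ν : Measure (Ed d)}
    (L : IsLevyPair d A ν) {R : ℝ} (hR : 0 < R) :
    ‖A‖ / R ^ 2 ≤ psiStar d A ν (1 / R) := by
  have hR2 : 0 < R ^ 2 := by positivity
  have hM : 0 ≤ psiStar d A ν (1 / R) :=
    (L.rePsi_nonneg 0).trans (L.rePsi_le_psiStar hR (by simp; positivity))
  rw [div_le_iff₀ hR2]
  refine A.opNorm_le_of_re_inner_le (by positivity) fun x y hx hy => ?_
  have hq : ‖(1 / (2 * R)) • (x + y)‖ ≤ 1 / R := by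
    rw [norm_smul, Real.norm_of_nonneg (by positivity)]
    have : ‖x + y‖ ≤ 2 := (norm_add_le x y).trans (by linarith)
    calc 1 / (2 * R) * ‖x + y‖ ≤ 1 / (2 * R) * 2 := by gcongr
      _ = 1 / R := by field_simp
  have h1 : ⟪(1 / (2 * R)) • (x + y), A ((1 / (2 * R)) • (x + y))⟫ ≤ psiStar d A ν (1 / R) :=
    (le_add_of_nonneg_right (integral_cos_nonneg ν _)).trans (L.rePsi_le_psiStar hR hq)
  have h2 := L.nonneg (x - y)
  have h3 := L.symm y x
  have h4 := real_inner_comm x (A y)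
  have h5 := real_inner_comm y (A x)
  rw [map_smul, inner_smul_left, inner_smul_right] at h1
  simp only [map_add, map_sub, inner_add_left, inner_add_right, inner_sub_left, inner_sub_right,
    conj_trivial] at h1 h2
  have h6 : (⟪x, A x⟫ + ⟪y, A x⟫ + (⟪x, A y⟫ + ⟪y, A y⟫)) / 4
      ≤ psiStar d A ν (1 / R) * R ^ 2 := by
    rw [← div_le_iff₀ hR2]
    refine le_trans (le_of_eq ?_) h1
    field_simp
    ring
  simp only [RCLike.re_to_real]
  linarith

/-- The average over `s ∈ (0, 1]` is what excludes the almost-returns of `cos` to `1`. -/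
lemma min_one_sq_le_integral (u : ℝ) :
    min 1 (u ^ 2) ≤ 15 * ∫ s in Ioc (0 : ℝ) 1, (1 - Real.cos (s * u)) := by
  have hpi := Real.pi_gt_three
  rw [← intervalIntegral.integral_of_le zero_le_one]
  rcases le_or_gt |u| Real.pi with hu | hu
  · have hpi2 : Real.pi ^ 2 ≤ 10 := by nlinarith [Real.pi_lt_d2]
    have h1 : ∫ s in (0 : ℝ)..1, (1 / 5 * u ^ 2) * s ^ 2 ≤
        ∫ s in (0 : ℝ)..1, (1 - Real.cos (s * u)) := by
      refine intervalIntegral.integral_mono_on zero_le_one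
        (Continuous.intervalIntegrable (by fun_prop) _ _)
        (Continuous.intervalIntegrable (by fun_prop) _ _) fun s hs => ?_
      have h2 : |s * u| ≤ Real.pi := by
        rw [abs_mul, abs_of_nonneg hs.1]
        nlinarith [abs_nonneg u, hs.1, hs.2]
      have h3 := Real.cos_le_one_sub_mul_cos_sq h2
      have h4 : 1 / 5 ≤ 2 / Real.pi ^ 2 := by
        rw [div_le_div_iff₀ (by norm_num) (by positivity)]; linarith
      nlinarith [mul_le_mul_of_nonneg_right h4 (sq_nonneg (s * u))]
    rw [intervalIntegral.integral_const_mul, integral_pow] at h1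
    refine (min_le_right _ _).trans ?_
    norm_num at h1
    linarith
  · have hu0 : u ≠ 0 := by rintro rfl; simp at hu; linarith
    have h1 : ∫ s in (0 : ℝ)..1, (1 - Real.cos (s * u)) = 1 - u⁻¹ * Real.sin u := by
      rw [intervalIntegral.integral_sub (by simp)
        (Continuous.intervalIntegrable (by fun_prop) _ _),
        intervalIntegral.integral_comp_mul_right (fun x => Real.cos x) hu0, integral_cos]
      simp
    have h2 : u⁻¹ * Real.sin u ≤ 1 / 3 := by
      refine (le_abs_self _).trans ?_
      rw [abs_mul, abs_inv]
      calc |u|⁻¹ * |Real.sin u| ≤ |u|⁻¹ * 1 := by gcongr; exact Real.abs_sin_le_one u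
        _ = 1 / |u| := by ring
        _ ≤ 1 / 3 := by gcongr; linarith
    rw [h1]
    exact (min_le_left _ _).trans (by linarith)

/-- Bound of one coordinate of the jump part, by averaging `Re ψ` over a segment. -/
lemma IsLevyPair.integral_coord_le {d : ℕ} {A : Ed d →L[ℝ] Ed d} {ν : Measure (Ed d)}
    (L : IsLevyPair d A ν) {R : ℝ} (hR : 0 < R) (j : Fin d) :
    ∫ z : Ed d, min 1 ((z j / R) ^ 2) ∂ν ≤ 15 * psiStar d A ν (1 / R) := by
  have := L.sigmaFinite
  let e : ℝ → Ed d := fun s => EuclideanSpace.single j (s / R)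
  have he : ∀ s z, ⟪e s, z⟫ = s * (z j / R) := by
    intro s z
    simp [e, EuclideanSpace.inner_single_left]
    ring
  have hen : ∀ s ∈ Ioc (0 : ℝ) 1, ‖e s‖ ≤ 1 / R := by
    intro s hs
    simp only [e, PiLp.norm_single, Real.norm_eq_abs, abs_div, abs_of_pos hR,
      abs_of_pos hs.1]
    gcongr
    exact hs.2
  have hpt : ∀ s ∈ Ioc (0 : ℝ) 1, ∀ z : Ed d,
      1 - Real.cos (s * (z j / R)) ≤ 2 * min 1 (‖z‖ ^ 2 / R ^ 2) := by
    intro s hs z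
    rw [← he]
    exact one_sub_cos_inner_le (hen s hs) z
  have hint : Integrable (Function.uncurry fun (s : ℝ) (z : Ed d) => 1 - Real.cos (s * (z j / R)))
      ((volume.restrict (Ioc (0 : ℝ) 1)).prod ν) := by
    refine (((L.integrable_min hR).const_mul 2).comp_snd (volume.restrict (Ioc (0 : ℝ) 1))).mono'
      (by unfold Function.uncurry; fun_prop :
        Measurable (Function.uncurry fun (s : ℝ) (z : Ed d) =>
          1 - Real.cos (s * (z j / R)))).aestronglyMeasurable ?_
    have hmem : ∀ᵐ p ∂((volume.restrict (Ioc (0 : ℝ) 1)).prod ν), p.1 ∈ Ioc (0 : ℝ) 1 :=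
      Measure.quasiMeasurePreserving_fst.ae (ae_restrict_mem measurableSet_Ioc)
    filter_upwards [hmem] with p hp
    simp only [Function.uncurry]
    rw [Real.norm_of_nonneg (by linarith [Real.cos_le_one (p.1 * (p.2 j / R))])]
    exact hpt p.1 hp p.2
  calc ∫ z : Ed d, min 1 ((z j / R) ^ 2) ∂ν
      ≤ ∫ z : Ed d, 15 * (∫ s in Ioc (0 : ℝ) 1, (1 - Real.cos (s * (z j / R)))) ∂ν :=
        integral_mono_of_nonneg (Eventually.of_forall fun z => by positivity)
          (hint.integral_prod_right.const_mul 15)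
          (Eventually.of_forall fun z => min_one_sq_le_integral _)
    _ = 15 * ∫ s in Ioc (0 : ℝ) 1, ∫ z : Ed d, (1 - Real.cos (s * (z j / R))) ∂ν := by
        rw [integral_const_mul, integral_integral_swap hint]
    _ ≤ 15 * ∫ s in Ioc (0 : ℝ) 1, psiStar d A ν (1 / R) := by
        gcongr 15 * ?_
        refine setIntegral_mono_on hint.integral_prod_left (by simp) measurableSet_Ioc
          fun s hs => ?_
        refine le_trans ?_ (L.rePsi_le_psiStar hR (hen s hs))
        simp only [← he]
        exact le_add_of_nonneg_left (L.nonneg _)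
    _ = 15 * psiStar d A ν (1 / R) := by simp

lemma min_one_sum_le {ι : Type*} (s : Finset ι) (f : ι → ℝ) (hf : ∀ i, 0 ≤ f i) :
    min 1 (∑ i ∈ s, f i) ≤ ∑ i ∈ s, min 1 (f i) := by
  classical
  induction s using Finset.induction_on with
  | empty => simp
  | insert a s ha ih =>
    rw [Finset.sum_insert ha, Finset.sum_insert ha]
    have h1 := hf a
    have h2 : 0 ≤ ∑ i ∈ s, f i := Finset.sum_nonneg fun i _ => hf i
    refine le_trans ?_ (add_le_add_right ih _)
    rcases le_total 1 (f a) with h | h <;> rcases le_total 1 (∑ i ∈ s, f i) with h' | h' <;>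
      simp only [h, h', min_eq_left, min_eq_right] <;>
      first
        | exact min_le_right _ _
        | exact (min_le_left _ _).trans (by linarith)

lemma IsLevyPair.concFn_le_psiStar {d : ℕ} {A : Ed d →L[ℝ] Ed d} {ν : Measure (Ed d)}
    (L : IsLevyPair d A ν) {R : ℝ} (hR : 0 < R) :
    concFn d A ν R ≤ (1 + 15 * d) * psiStar d A ν (1 / R) := by
  have hi : ∀ j : Fin d, Integrable (fun z : Ed d => min 1 ((z j / R) ^ 2)) ν := by
    intro j
    refine (L.integrable_min hR).mono'
      (by fun_prop : Measurable fun z : Ed d => min 1 ((z j / R) ^ 2)).aestronglyMeasurable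
      (Eventually.of_forall fun z => ?_)
    rw [Real.norm_of_nonneg (by positivity), div_pow]
    have : z j ^ 2 ≤ ‖z‖ ^ 2 := by
      rw [← sq_abs]
      gcongr
      exact PiLp.norm_apply_le z j
    gcongr
  have h1 : ∫ z : Ed d, min 1 (‖z‖ ^ 2 / R ^ 2) ∂ν ≤ ∑ _j : Fin d, 15 * psiStar d A ν (1 / R) :=
    calc ∫ z : Ed d, min 1 (‖z‖ ^ 2 / R ^ 2) ∂ν
        ≤ ∫ z : Ed d, ∑ j, min 1 ((z j / R) ^ 2) ∂ν := by
          refine integral_mono (L.integrable_min hR) (integrable_finsetSum _ fun j _ => hi j)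
            fun z => ?_
          have h2 : ‖z‖ ^ 2 / R ^ 2 = ∑ j, (z j / R) ^ 2 := by
            rw [EuclideanSpace.norm_sq_eq, Finset.sum_div]
            simp [div_pow]
          dsimp only
          rw [h2]
          exact min_one_sum_le _ _ fun j => sq_nonneg _
      _ = ∑ j, ∫ z : Ed d, min 1 ((z j / R) ^ 2) ∂ν := integral_finsetSum _ fun j _ => hi j
      _ ≤ _ := Finset.sum_le_sum fun j _ => L.integral_coord_le hR j
  have h2 := L.norm_A_le hR
  simp only [Finset.sum_const, Finset.card_univ, Fintype.card_fin, nsmul_eq_mul] at h1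
  unfold concFn
  linarith

/-! ### The integral estimate -/

lemma integrable_norm_pow_mul_exp {d : ℕ} (hd : 1 ≤ d) (m : ℕ) {α κ : ℝ} (hα : 0 < α)
    (hκ : 0 < κ) : Integrable (fun w : Ed d => ‖w‖ ^ m * Real.exp (-κ * ‖w‖ ^ α)) := by
  have : Nonempty (Fin d) := ⟨⟨0, hd⟩⟩
  have hn : Nontrivial (Ed d) := inferInstance
  refine (integrable_fun_norm_addHaar (volume : Measure (Ed d))
    (f := fun y : ℝ => y ^ m * Real.exp (-κ * y ^ α))).2 ?_
  have h := integrableOn_rpow_mul_exp_neg_mul_rpow (p := α) (s := ((d - 1 + m : ℕ) : ℝ))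
    (lt_of_lt_of_le (by norm_num) (Nat.cast_nonneg _)) hα hκ
  refine h.congr_fun (fun y _ => ?_) measurableSet_Ioi
  simp only [Real.rpow_natCast, finrank_euclideanSpace, Fintype.card_fin, smul_eq_mul]
  ring

/-- The pointwise bound; the factor `exp κ` absorbs the ball `‖z‖ ≤ 1 / R`, where (C3) gives
nothing. -/
lemma exp_neg_rePsi_le {d : ℕ} {A : Ed d →L[ℝ] Ed d} {ν : Measure (Ed d)}
    (L : IsLevyPair d A ν) {T : ℝ≥0∞} {c α t R : ℝ} (hα : 0 < α) (hc : 0 < c)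
    (h3 : CondC3 d A ν T c α) (ht : 0 < t) (hR : 0 < R) (hRt : concFn d A ν R = 1 / t)
    (hRT : ENNReal.ofReal R < T) (z : Ed d) :
    Real.exp (-(t * rePsi d A ν z)) ≤ Real.exp (c ^ 2 / (1 + 15 * d)) *
      Real.exp (-(c ^ 2 / (1 + 15 * d)) * ‖R • z‖ ^ α) := by
  set κ := c ^ 2 / (1 + 15 * (d : ℝ)) with hκ
  have hD : 0 < 1 + 15 * (d : ℝ) := by positivity
  have hκ0 : 0 < κ := by positivity
  rw [← Real.exp_add, Real.exp_le_exp]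
  have hnz : ‖R • z‖ = R * ‖z‖ := by rw [norm_smul, Real.norm_of_nonneg hR.le]
  rcases le_or_gt ‖R • z‖ 1 with h | h
  · have h1 := Real.rpow_le_one (norm_nonneg _) h hα.le
    have h2 := mul_nonneg ht.le (L.rePsi_nonneg z)
    nlinarith
  · have hz : 1 / R < ‖z‖ := by
      rw [div_lt_iff₀ hR, mul_comm, ← hnz]; exact h
    have hT : 1 / T < ENNReal.ofReal (1 / R) := by
      rw [one_div, one_div, ENNReal.ofReal_inv_of_pos hR]
      exact ENNReal.inv_lt_inv.2 hRT
    have h1 := h3.1 z (hT.trans_le (ENNReal.ofReal_le_ofReal hz.le))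
    have h2 := h3.2 ‖R • z‖ (1 / R) h.le (by positivity) hT
    have h4 : ‖R • z‖ * (1 / R) = ‖z‖ := by rw [hnz]; field_simp
    rw [h4] at h2
    have h5 : 1 / t ≤ (1 + 15 * d) * psiStar d A ν (1 / R) := hRt ▸ L.concFn_le_psiStar hR
    have h6 : 1 / (1 + 15 * (d : ℝ)) ≤ t * psiStar d A ν (1 / R) := by
      rw [div_le_iff₀ hD]
      rw [div_le_iff₀ ht] at h5
      linarith
    have h7 : κ * ‖R • z‖ ^ α ≤ t * rePsi d A ν z :=
      calc κ * ‖R • z‖ ^ α = c * (c * ‖R • z‖ ^ α) * (1 / (1 + 15 * d)) := by rw [hκ]; ring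
        _ ≤ c * (c * ‖R • z‖ ^ α) * (t * psiStar d A ν (1 / R)) := by gcongr
        _ = t * (c * (c * ‖R • z‖ ^ α * psiStar d A ν (1 / R))) := by ring
        _ ≤ t * (c * psiStar d A ν ‖z‖) := by gcongr
        _ ≤ t * rePsi d A ν z := by gcongr
    linarith

/-- The restriction on `t` places `h⁻¹(1/t)` below `T₃`. -/
lemma ofReal_lt_of_time {d : ℕ} {A : Ed d →L[ℝ] Ed d} {ν : Measure (Ed d)}
    (L : IsLevyPair d A ν) {T : ℝ≥0∞} (hT : 0 < T) {t R : ℝ} (ht : 0 < t)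
    (hRt : concFn d A ν R = 1 / t)
    (h : ENNReal.ofReal t < (if T = ⊤ then ⊤ else ENNReal.ofReal (1 / concFn d A ν T.toReal))) :
    ENNReal.ofReal R < T := by
  by_cases hTop : T = ⊤
  · simp [hTop]
  rw [if_neg hTop] at h
  have hTp : 0 < T.toReal := ENNReal.toReal_pos hT.ne' hTop
  rw [← ENNReal.ofReal_toReal hTop]
  refine (ENNReal.ofReal_lt_ofReal_iff hTp).2 ?_
  by_contra! hle
  have h1 := L.concFn_anti hTp hle
  rw [hRt] at h1
  have h2 : t < 1 / concFn d A ν T.toReal := (ENNReal.ofReal_lt_ofReal_iff_of_nonneg ht.le).1 h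
  have h3 := one_div_le_one_div_of_le (by positivity : (0 : ℝ) < 1 / t) h1
  rw [one_div_one_div] at h3
  linarith

theorem stmt_12 (d : ℕ) (hd : 1 ≤ d) (m : ℕ) (α3 c3 : ℝ) (hα : 0 < α3 ∧ α3 ≤ 2)
    (hc : 0 < c3 ∧ c3 ≤ 1) :
    ∃ c5 : ℝ, 0 < c5 ∧
      ∀ (A : Ed d →L[ℝ] Ed d) (ν : Measure (Ed d)) (hinv : ℝ → ℝ) (T3 : ℝ≥0∞),
        IsLevyPair d A ν → IsInvOn (concFn d A ν) hinv → 0 < T3 →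
        CondC3 d A ν T3 c3 α3 →
        ∀ t : ℝ, 0 < t →
          ENNReal.ofReal t <
            (if T3 = ⊤ then ⊤
             else ENNReal.ofReal (1 / concFn d A ν T3.toReal)) →
          (∫ z : Ed d, ‖z‖ ^ m * Real.exp (-(t * rePsi d A ν z))) ≤
            c5 * hinv (1 / t) ^ (-(d : ℤ) - (m : ℤ)) := by
  set κ := c3 ^ 2 / (1 + 15 * (d : ℝ)) with hκ
  have hκ0 : 0 < κ := by have := hc.1; positivity
  set I := ∫ w : Ed d, ‖w‖ ^ m * Real.exp (-κ * ‖w‖ ^ α3) with hI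
  have hI0 : 0 ≤ I := integral_nonneg fun w => by positivity
  refine ⟨Real.exp κ * I + 1, by positivity, ?_⟩
  intro A ν hinv T3 L hh hT h3 t ht htT
  have hR := hh.pos (1 / t) (by positivity)
  have hRt := hh.right_inv (1 / t) (by positivity)
  set R := hinv (1 / t)
  have hRT := ofReal_lt_of_time L hT ht hRt htT
  have hint := integrable_norm_pow_mul_exp hd m hα.1 hκ0
  have hRpow : R ^ (-(d : ℤ) - (m : ℤ)) = (R ^ d)⁻¹ * (R ^ m)⁻¹ := by
    rw [sub_eq_add_neg, zpow_add₀ hR.ne', zpow_neg, zpow_neg, zpow_natCast, zpow_natCast]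
  calc ∫ z : Ed d, ‖z‖ ^ m * Real.exp (-(t * rePsi d A ν z))
      ≤ ∫ z : Ed d, (Real.exp κ * (R ^ m)⁻¹) *
          (‖R • z‖ ^ m * Real.exp (-κ * ‖R • z‖ ^ α3)) := by
        refine integral_mono_of_nonneg (Eventually.of_forall fun z => by positivity)
          ((hint.comp_smul hR.ne').const_mul _) (Eventually.of_forall fun z => ?_)
        have h1 := exp_neg_rePsi_le L hα.1 hc.1 h3 ht hR hRt hRT z
        have h2 : (R ^ m)⁻¹ * ‖R • z‖ ^ m = ‖z‖ ^ m := by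
          rw [norm_smul, Real.norm_of_nonneg hR.le, mul_pow]
          field_simp
        dsimp only
        calc ‖z‖ ^ m * Real.exp (-(t * rePsi d A ν z))
            ≤ ‖z‖ ^ m * (Real.exp κ * Real.exp (-κ * ‖R • z‖ ^ α3)) := by gcongr
          _ = _ := by rw [← h2]; ring
    _ = Real.exp κ * I * R ^ (-(d : ℤ) - (m : ℤ)) := by
        rw [integral_const_mul, Measure.integral_comp_smul volume
          (fun w : Ed d => ‖w‖ ^ m * Real.exp (-κ * ‖w‖ ^ α3)) R, hRpow,
          finrank_euclideanSpace, Fintype.card_fin, abs_of_pos (by positivity), smul_eq_mul]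
        ring
    _ ≤ (Real.exp κ * I + 1) * R ^ (-(d : ℤ) - (m : ℤ)) := by
        gcongr
        linarith

end
end
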